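/- Let n ≥ 1, p ≥ 1, and let H_0, …, H_{2n−2} be p×p complex matrices with H_k = H_k* for all k. Let H = {H_{i+j−2}}_{i,j=1}^n be the np×np block Hankel matrix. Let A be the np×np block matrix whose (i,j) block equals I_p when i = j + 1 and 0 otherwise (the block lower shift). Let Φ₁ be the np×p block column −i·(0, H_0, H_1, …, H_{n−2})ᵀ and Φ₂ the np×p block column (I_p, 0, …, 0)ᵀ. Then the operator identity AH − HA* = i(Φ₁Φ₂* + Φ₂Φ₁*) holds. -/

import Mathlib

/-!
Since the coefficients are self-adjoint, `Hᴴ = H`, so `H * Aᴴ = (A * H)ᴴ`, and likewise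
`Φ₂ * Φ₁ᴴ = (Φ₁ * Φ₂ᴴ)ᴴ`. It thus suffices to know `A * H` and `Φ₁ * Φ₂ᴴ` blockwise. With blocks
indexed from `0`, the `(i, j)` block of `A * H` is `H_{i+j-1}` for `i ≠ 0` and zero for `i = 0`;
in the difference with its adjoint everything cancels except the first block row and column,
which is what the right-hand side records.
-/

open Matrix

/-- the operator identity `A H - H A^* = i (Φ₁ Φ₂^* + Φ₂ Φ₁^*)` for a
self-adjoint block Hankel matrix `H = {H_{i+j-2}}`. -/
theorem hankel_operator_identity
    {p n : ℕ} (hp : 1 ≤ p) (hn : 1 ≤ n)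
    (Hm : ℕ → Matrix (Fin p) (Fin p) ℂ)
    (hHm : ∀ k ≤ 2 * n - 2, (Hm k)ᴴ = Hm k)
    (H : Matrix (Fin n × Fin p) (Fin n × Fin p) ℂ)
    (hH : H = Matrix.of fun x y => Hm ((x.1 : ℕ) + (y.1 : ℕ)) x.2 y.2)
    (A : Matrix (Fin n × Fin p) (Fin n × Fin p) ℂ)
    (hA : A = Matrix.of fun x y =>
      if (x.1 : ℕ) = (y.1 : ℕ) + 1 ∧ x.2 = y.2 then 1 else 0)
    (Φ₁ : Matrix (Fin n × Fin p) (Fin p) ℂ)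
    (hΦ₁ : Φ₁ = Matrix.of fun x b =>
      -Complex.I * (if (x.1 : ℕ) = 0 then 0 else Hm ((x.1 : ℕ) - 1) x.2 b))
    (Φ₂ : Matrix (Fin n × Fin p) (Fin p) ℂ)
    (hΦ₂ : Φ₂ = Matrix.of fun x b => if (x.1 : ℕ) = 0 ∧ x.2 = b then 1 else 0) :
    A * H - H * Aᴴ = Complex.I • (Φ₁ * Φ₂ᴴ + Φ₂ * Φ₁ᴴ) := by
  -- Left multiplication by the block shift moves every block row down by one.
  have hAH : ∀ (i : Fin n) (a : Fin p) (y : Fin n × Fin p), (A * H) (i, a) y =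
      if (i : ℕ) = 0 then 0 else Hm ((i : ℕ) - 1 + (y.1 : ℕ)) a y.2 := by
    intro i a y
    subst hA hH
    rw [Matrix.mul_apply]
    by_cases hi : (i : ℕ) = 0
    · rw [if_pos hi]
      apply Finset.sum_eq_zero
      intro z _
      have hz : ¬ ((i : ℕ) = (z.1 : ℕ) + 1 ∧ a = z.2) := by omega
      simp [hz]
    · rw [if_neg hi, Finset.sum_eq_single (⟨(i : ℕ) - 1, by omega⟩, a)]
      · have h1 : (i : ℕ) = (i : ℕ) - 1 + 1 := by omega
        simp [← h1]
      · rintro ⟨k, c⟩ _ hne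
        have hz : ¬ ((i : ℕ) = (k : ℕ) + 1 ∧ a = c) := by
          rintro ⟨h1, rfl⟩
          exact hne (Prod.ext (Fin.ext (by simp; omega)) rfl)
        simp [hz]
      · simp
  -- Only the first block column of `Φ₁ * Φ₂ᴴ` is nonzero, and it equals `Φ₁`.
  have hΦ : ∀ (x : Fin n × Fin p) (j : Fin n) (b : Fin p), (Φ₁ * Φ₂ᴴ) x (j, b) =
      if (j : ℕ) = 0 then Φ₁ x b else 0 := by
    intro x j b
    rw [Matrix.mul_apply, hΦ₂]
    by_cases hj : (j : ℕ) = 0 <;> simp [hj, apply_ite]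
  have hHm' : ∀ k ≤ 2 * n - 2, ∀ a b, star (Hm k b a) = Hm k a b := fun k hk a b =>
    congrFun (congrFun (hHm k hk) a) b
  have hHH : Hᴴ = H := by
    ext ⟨i, a⟩ ⟨j, b⟩
    rw [hH, Matrix.conjTranspose_apply, Matrix.of_apply, Matrix.of_apply, add_comm (j : ℕ)]
    exact hHm' _ (by omega) a b
  have e1 : H * Aᴴ = (A * H)ᴴ := by rw [Matrix.conjTranspose_mul, hHH]
  have e2 : Φ₂ * Φ₁ᴴ = (Φ₁ * Φ₂ᴴ)ᴴ := by
    rw [Matrix.conjTranspose_mul, Matrix.conjTranspose_conjTranspose]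
  rw [e1, e2]
  ext ⟨i, a⟩ ⟨j, b⟩
  simp only [Matrix.sub_apply, Matrix.smul_apply, Matrix.add_apply, Matrix.conjTranspose_apply,
    hAH, hΦ, smul_eq_mul]
  simp only [hΦ₁, Matrix.of_apply]
  have hI : ∀ z : ℂ, Complex.I * (Complex.I * z) = -z := fun z => by
    rw [← mul_assoc, Complex.I_mul_I, neg_one_mul]
  by_cases hi : (i : ℕ) = 0 <;> by_cases hj : (j : ℕ) = 0
  · simp [hi, hj]
  · have h := hHm' ((j : ℕ) - 1) (by omega) a b
    simp only [Complex.star_def] at h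
    simp [hi, hj, h, hI]
  · simp [hi, hj, hI]
  -- Away from the first block row and column both shifts give `H_{i+j-1}`, and they cancel.
  · have h := hHm' ((j : ℕ) - 1 + (i : ℕ)) (by omega) a b
    have e : (i : ℕ) - 1 + (j : ℕ) = (j : ℕ) - 1 + (i : ℕ) := by omega
    simp only [Complex.star_def] at h
    simp [hi, hj, h, e]
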